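/- arXiv:1310.7308 — 7 statements merged into one kernel-verified Lean document; each statement's English description precedes it below -/
import Mathlib

section
/- Let G be a simple graph on n vertices with domination number γ, where 2 ≤ γ ≤ n−1. Then the Laplacian spectral radius of G satisfies μ(G) ≤ n − γ + 2; equivalently, every eigenvalue of the Laplacian matrix L(G) is at most n − γ + 2. -/
open SimpleGraph Matrix

/-- `S` is a dominating set of `G`: every vertex outside `S` has a neighbor in `S`. -/
def IsDominatingSet {V : Type*} (G : SimpleGraph V) (S : Set V) : Prop :=
  ∀ v : V, v ∉ S → ∃ u ∈ S, G.Adj u v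

/-- The domination number of a finite graph: the minimum cardinality of a dominating set. -/
noncomputable def dominationNumber {V : Type*} [Fintype V] (G : SimpleGraph V) : ℕ :=
  sInf {k : ℕ | ∃ S : Finset V, S.card = k ∧ IsDominatingSet G (S : Set V)}


theorem domination_union_bound
    {V : Type*} [Fintype V] [DecidableEq V] (G : SimpleGraph V) [DecidableRel G.Adj] (u v : V) :
    dominationNumber G + (G.neighborFinset u ∪ G.neighborFinset v).card ≤ Fintype.card V + 2 := by
  have h1 : dominationNumber G ≤
      (({u, v} : Finset V) ∪ (G.neighborFinset u ∪ G.neighborFinset v)ᶜ).card := by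
    apply Nat.sInf_le
    refine ⟨_, rfl, ?_⟩
    intro w hw
    simp only [Finset.coe_union, Set.mem_union, Finset.mem_coe, Finset.mem_compl,
      Finset.mem_union, mem_neighborFinset, not_or, not_not] at hw
    rcases (show G.Adj u w ∨ G.Adj v w by tauto) with h | h
    · exact ⟨u, by simp, h⟩
    · exact ⟨v, by simp, h⟩
  have h2 := Finset.card_union_le ({u, v} : Finset V) (G.neighborFinset u ∪ G.neighborFinset v)ᶜ
  have h3 : ({u, v} : Finset V).card ≤ 2 := Finset.card_le_two
  have h4 := Finset.card_add_card_compl (G.neighborFinset u ∪ G.neighborFinset v)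
  omega

theorem laplacian_eigenvalue_le_of_dominationNumber
    {V : Type*} [Fintype V] [DecidableEq V] (G : SimpleGraph V) [DecidableRel G.Adj]
    (n γ : ℕ) (hn : Fintype.card V = n) (hγ : dominationNumber G = γ)
    (hγ2 : 2 ≤ γ) (hγn : γ ≤ n - 1)
    (μ : ℝ) (hμ : Module.End.HasEigenvalue (Matrix.toLin' (G.lapMatrix ℝ)) μ) :
    μ ≤ (n : ℝ) - γ + 2 := by
  obtain ⟨x, hx⟩ := hμ.exists_hasEigenvector
  have hx0 : x ≠ 0 := hx.2
  have hev : ∀ i, ∑ w ∈ G.neighborFinset i, (x i - x w) = μ * x i := by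
    intro i
    have h := congrFun hx.apply_eq_smul i
    rw [Matrix.toLin'_apply, SimpleGraph.lapMatrix_mulVec_apply] at h
    rw [Finset.sum_sub_distrib, Finset.sum_const, card_neighborFinset_eq_degree, nsmul_eq_mul, h]
    rfl
  have hne : Nonempty V := by
    by_contra h
    rw [not_nonempty_iff] at h
    exact hx0 (Subsingleton.elim _ _)
  obtain ⟨u, hu⟩ := Finite.exists_max x
  obtain ⟨v, hv⟩ := Finite.exists_min x
  have hb := domination_union_bound G u v
  rw [hγ, hn] at hb
  have hb' : (γ : ℝ) + ((G.neighborFinset u ∪ G.neighborFinset v).card : ℝ) ≤ n + 2 := by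
    exact_mod_cast hb
  set c : ℝ := ((G.neighborFinset u ∪ G.neighborFinset v).card : ℝ) with hc
  have hc0 : 0 ≤ c := by positivity
  suffices μ ≤ c by linarith
  rcases (hv u).eq_or_lt with h | h
  · have hconst : ∀ w, x w = x u := fun w => le_antisymm (hu w) (h ▸ hv w)
    have hu0 : x u ≠ 0 := by
      intro h0
      exact hx0 (funext fun w => by rw [hconst w, h0]; rfl)
    have := hev u
    rw [Finset.sum_eq_zero (fun w _ => by rw [hconst w, sub_self])] at this
    have : μ = 0 := by
      rcases mul_eq_zero.mp this.symm with h | h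
      · exact h
      · exact absurd h hu0
    linarith
  · have key : μ * (x u - x v) ≤ c * (x u - x v) := by
      have e1 : ∑ w ∈ G.neighborFinset u, (x u - x w) =
          ∑ w ∈ G.neighborFinset u ∪ G.neighborFinset v,
            if w ∈ G.neighborFinset u then (x u - x w) else 0 := by
        rw [← Finset.sum_filter]
        congr 1
        ext w; simp; tauto
      have e2 : ∑ w ∈ G.neighborFinset v, (x v - x w) =
          ∑ w ∈ G.neighborFinset u ∪ G.neighborFinset v,
            if w ∈ G.neighborFinset v then (x v - x w) else 0 := by
        rw [← Finset.sum_filter]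
        congr 1
        ext w; simp; tauto
      rw [mul_sub, ← hev u, ← hev v, e1, e2, ← Finset.sum_sub_distrib, hc, ← nsmul_eq_mul]
      apply Finset.sum_le_card_nsmul
      intro w _
      have := hu w
      have := hv w
      split_ifs <;> linarith
    exact le_of_mul_le_mul_right key (by linarith)
end

section
/- Let n and γ be integers with 2 ≤ γ ≤ n−1, and let a be an integer with 2 ≤ a and 2 ≤ n−γ+2−a. Then the graph G = K_{a, n−γ+2−a} ∪ (γ−2)K_1, the vertex-disjoint union of the complete bipartite graph with part sizes a and n−γ+2−a together with γ−2 isolated vertices, has n vertices, domination number γ, and its Laplacian spectral radius equals n − γ + 2; in particular n − γ + 2 is an eigenvalue of L(G) and every eigenvalue of L(G) is at most n − γ + 2. -/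
open SimpleGraph Matrix

lemma aux_adj_inr {a b c : ℕ} (u : (Fin a ⊕ Fin b) ⊕ Fin c) (z : Fin c) :
    ¬ (completeBipartiteGraph (Fin a) (Fin b) ⊕g (⊥ : SimpleGraph (Fin c))).Adj u (Sum.inr z) := by
  rcases u with u | u <;> simp [SimpleGraph.sum]

lemma aux_dom (a b c : ℕ) (ha : 2 ≤ a) (hb : 2 ≤ b) :
    dominationNumber (completeBipartiteGraph (Fin a) (Fin b) ⊕g (⊥ : SimpleGraph (Fin c)))
      = c + 2 := by
  classical
  have hcard : ∀ p q : Fin a ⊕ Fin b, p ≠ q →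
      (insert (Sum.inl p) (insert (Sum.inl q)
        ((Finset.univ : Finset (Fin c)).map Function.Embedding.inr)) :
          Finset ((Fin a ⊕ Fin b) ⊕ Fin c)).card = c + 2 := by
    intro p q hpq
    rw [Finset.card_insert_of_notMem, Finset.card_insert_of_notMem]
    · simp
    · simp
    · simp [hpq]
  have hne : (⟨0, by omega⟩ : Fin a) ≠ ⟨1, by omega⟩ := by simp
  have hne' : (⟨0, by omega⟩ : Fin b) ≠ ⟨1, by omega⟩ := by simp
  unfold dominationNumber
  apply le_antisymm
  · apply Nat.sInf_le
    refine ⟨_, hcard (Sum.inl ⟨0, by omega⟩) (Sum.inr ⟨0, by omega⟩) (by simp), ?_⟩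
    intro v hv
    rcases v with (i | j) | z
    · exact ⟨Sum.inl (Sum.inr ⟨0, by omega⟩), by simp, by simp [SimpleGraph.sum]⟩
    · exact ⟨Sum.inl (Sum.inl ⟨0, by omega⟩), by simp, by simp [SimpleGraph.sum]⟩
    · simp at hv
  · apply le_csInf
    · exact ⟨_, Finset.univ, rfl, fun v hv => by simp at hv⟩
    rintro k ⟨S, rfl, hS⟩
    have hz : ∀ z : Fin c, Sum.inr z ∈ S := by
      intro z
      by_contra h
      obtain ⟨u, -, hu⟩ := hS (Sum.inr z) (by simpa using h)
      exact aux_adj_inr u z hu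
    have hpq : ∃ p q : Fin a ⊕ Fin b, p ≠ q ∧ Sum.inl p ∈ S ∧ Sum.inl q ∈ S := by
      by_cases hA : ∃ i : Fin a, Sum.inl (Sum.inl i) ∈ S
      · by_cases hB : ∃ j : Fin b, Sum.inl (Sum.inr j) ∈ S
        · obtain ⟨i, hi⟩ := hA
          obtain ⟨j, hj⟩ := hB
          exact ⟨_, _, by simp, hi, hj⟩
        · have h : ∀ i : Fin a, Sum.inl (Sum.inl i) ∈ S := by
            intro i
            by_contra h
            obtain ⟨u, hu, hadj⟩ := hS (Sum.inl (Sum.inl i)) (by simpa using h)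
            rcases u with (u | u) | u
            · simp [SimpleGraph.sum] at hadj
            · exact hB ⟨u, by simpa using hu⟩
            · simp [SimpleGraph.sum] at hadj
          exact ⟨_, _, fun e => hne (Sum.inl_injective e), h _, h _⟩
      · have h : ∀ i : Fin b, Sum.inl (Sum.inr i) ∈ S := by
          intro i
          by_contra h
          obtain ⟨u, hu, hadj⟩ := hS (Sum.inl (Sum.inr i)) (by simpa using h)
          rcases u with (u | u) | u
          · exact hA ⟨u, by simpa using hu⟩
          · simp [SimpleGraph.sum] at hadj
          · simp [SimpleGraph.sum] at hadj
        exact ⟨_, _, fun e => hne' (Sum.inr_injective e), h _, h _⟩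
    obtain ⟨p, q, hpq, hp, hq⟩ := hpq
    rw [← hcard p q hpq]
    apply Finset.card_le_card
    intro x hx
    simp only [Finset.mem_insert, Finset.mem_map, Finset.mem_univ, true_and] at hx
    rcases hx with rfl | rfl | ⟨z, rfl⟩
    · exact hp
    · exact hq
    · exact hz z

lemma aux_lap {V : Type*} [Fintype V] [DecidableEq V] (G : SimpleGraph V) [DecidableRel G.Adj]
    (x : V → ℝ) (v : V) :
    (G.lapMatrix ℝ *ᵥ x) v = ∑ u, if G.Adj v u then x v - x u else 0 := by
  rw [SimpleGraph.lapMatrix_mulVec_apply, ← Finset.sum_filter, Finset.sum_sub_distrib,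
    ← SimpleGraph.neighborFinset_eq_filter]
  simp

lemma aux_spec (a b c : ℕ) (ha : 2 ≤ a) (hb : 2 ≤ b)
    (G : SimpleGraph ((Fin a ⊕ Fin b) ⊕ Fin c))
    (hG : G = completeBipartiteGraph (Fin a) (Fin b) ⊕g (⊥ : SimpleGraph (Fin c)))
    (inst : DecidableRel G.Adj) :
    Module.End.HasEigenvalue (Matrix.toLin' (G.lapMatrix ℝ)) ((a : ℝ) + b) ∧
        ∀ μ : ℝ, Module.End.HasEigenvalue (Matrix.toLin' (G.lapMatrix ℝ)) μ →
          μ ≤ (a : ℝ) + b := by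
  have hA : ∀ (x : (Fin a ⊕ Fin b) ⊕ Fin c → ℝ) i, (G.lapMatrix ℝ *ᵥ x) (Sum.inl (Sum.inl i)) =
      b * x (Sum.inl (Sum.inl i)) - ∑ j, x (Sum.inl (Sum.inr j)) := by
    intro x i
    rw [aux_lap]
    simp [hG, SimpleGraph.sum, Fintype.sum_sum_type]
  have hB : ∀ (x : (Fin a ⊕ Fin b) ⊕ Fin c → ℝ) i, (G.lapMatrix ℝ *ᵥ x) (Sum.inl (Sum.inr i)) =
      a * x (Sum.inl (Sum.inr i)) - ∑ j, x (Sum.inl (Sum.inl j)) := by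
    intro x i
    rw [aux_lap]
    simp [hG, SimpleGraph.sum, Fintype.sum_sum_type]
  have hC : ∀ (x : (Fin a ⊕ Fin b) ⊕ Fin c → ℝ) i, (G.lapMatrix ℝ *ᵥ x) (Sum.inr i) = 0 := by
    intro x i
    rw [aux_lap]
    simp [hG, SimpleGraph.sum, Fintype.sum_sum_type]
  have ha0 : (0 : ℝ) < a := by exact_mod_cast (by omega : 0 < a)
  have hb0 : (0 : ℝ) < b := by exact_mod_cast (by omega : 0 < b)
  constructor
  · apply Module.End.hasEigenvalue_of_hasEigenvector
      (x := Sum.elim (Sum.elim (fun _ => (b : ℝ)) (fun _ => -(a : ℝ))) (fun _ => 0))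
    rw [Module.End.hasEigenvector_iff, Module.End.mem_eigenspace_iff]
    constructor
    · rw [Matrix.toLin'_apply]
      funext v
      rcases v with (i | j) | z
      · rw [hA]; simp; ring
      · rw [hB]; simp; ring
      · rw [hC]; simp
    · intro h
      have := congrFun h (Sum.inl (Sum.inl ⟨0, by omega⟩))
      simp at this
      omega
  · intro μ hμ
    by_contra! hlt
    obtain ⟨x, hx⟩ := hμ.exists_hasEigenvector
    rw [Module.End.hasEigenvector_iff, Module.End.mem_eigenspace_iff, Matrix.toLin'_apply] at hx
    obtain ⟨hx, hx0⟩ := hx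
    set X := ∑ j, x (Sum.inl (Sum.inl j)) with hX
    set Y := ∑ j, x (Sum.inl (Sum.inr j)) with hY
    have h1 : ∀ i, (μ - b) * x (Sum.inl (Sum.inl i)) = -Y := by
      intro i
      have := congrFun hx (Sum.inl (Sum.inl i))
      rw [hA] at this
      simp at this
      linarith
    have h2 : ∀ i, (μ - a) * x (Sum.inl (Sum.inr i)) = -X := by
      intro i
      have := congrFun hx (Sum.inl (Sum.inr i))
      rw [hB] at this
      simp at this
      linarith
    have h3 : ∀ i, x (Sum.inr i) = 0 := by
      intro i
      have := congrFun hx (Sum.inr i)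
      rw [hC] at this
      simp at this
      rcases this with h | h
      · linarith
      · exact h
    have e1 : (μ - b) * X = -(a * Y) := by
      rw [hX, Finset.mul_sum, Finset.sum_congr rfl (fun i _ => h1 i)]; simp
    have e2 : (μ - a) * Y = -(b * X) := by
      rw [hY, Finset.mul_sum, Finset.sum_congr rfl (fun i _ => h2 i)]; simp
    have e3 : (μ * (μ - (a + b))) * X = 0 := by
      linear_combination (μ - a) * e1 - a * e2
    have hX0 : X = 0 := by
      rcases mul_eq_zero.1 e3 with h | h
      · rcases mul_eq_zero.1 h with h | h <;> linarith
      · exact h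
    have hY0 : Y = 0 := by
      rw [hX0] at e2
      rcases mul_eq_zero.1 (e2.trans (by simp)) with h | h
      · linarith
      · exact h
    apply hx0
    funext v
    rcases v with (i | j) | z
    · rcases mul_eq_zero.1 ((h1 i).trans (by simp [hY0])) with h | h
      · linarith
      · exact h
    · rcases mul_eq_zero.1 ((h2 j).trans (by simp [hX0])) with h | h
      · linarith
      · exact h
    · exact h3 z

theorem laplacian_spectral_radius_completeBipartite_union_isolated
    (n γ a : ℕ) (hγ2 : 2 ≤ γ) (hγn : γ ≤ n - 1)
    (ha : 2 ≤ a) (ha' : 2 ≤ n - γ + 2 - a) :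
    ∀ (G : SimpleGraph ((Fin a ⊕ Fin (n - γ + 2 - a)) ⊕ Fin (γ - 2))),
      G = (completeBipartiteGraph (Fin a) (Fin (n - γ + 2 - a))) ⊕g
          (⊥ : SimpleGraph (Fin (γ - 2))) →
      Fintype.card ((Fin a ⊕ Fin (n - γ + 2 - a)) ⊕ Fin (γ - 2)) = n ∧
      dominationNumber G = γ ∧
      (∀ inst : DecidableRel G.Adj,
        Module.End.HasEigenvalue (Matrix.toLin' (G.lapMatrix ℝ)) ((n : ℝ) - γ + 2) ∧
        ∀ μ : ℝ, Module.End.HasEigenvalue (Matrix.toLin' (G.lapMatrix ℝ)) μ →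
          μ ≤ (n : ℝ) - γ + 2) := by
  intro G hG
  refine ⟨?_, ?_, ?_⟩
  · simp only [Fintype.card_sum, Fintype.card_fin]
    omega
  · rw [hG, aux_dom _ _ _ ha ha']
    omega
  · intro inst
    have h := aux_spec a (n - γ + 2 - a) (γ - 2) ha ha' G hG inst
    have e : (a : ℝ) + ((n - γ + 2 - a : ℕ) : ℝ) = (n : ℝ) - γ + 2 := by
      have h1 : a + (n - γ + 2 - a) + γ = n + 2 := by omega
      have h2 : (a : ℝ) + ((n - γ + 2 - a : ℕ) : ℝ) + γ = n + 2 := by exact_mod_cast h1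
      linarith
    rw [e] at h
    exact h
end

section
/- Let G be a simple graph on n vertices with domination number γ, where 2 ≤ γ ≤ n−1. If the Laplacian spectral radius of G equals n − γ + 2 (i.e., n − γ + 2 is an eigenvalue of L(G)), then G has at least γ − 2 isolated vertices (vertices of degree zero). -/
open SimpleGraph Matrix

open Classical in
structure LCtx {V : Type*} [Fintype V] (G : SimpleGraph V) (γ : ℕ) (lam D : ℝ) (x : V → ℝ) : Prop where
  eig : ∀ w, lam * x w = ∑ y, (if G.Adj w y then x w - x y else 0)
  mx : ∀ y z, G.Adj y z → x y - x z ≤ D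
  pos : 0 < D
  dom : ∀ S : Finset V, IsDominatingSet G (S : Set V) → γ ≤ S.card
  lam_eq : lam = (Fintype.card V : ℝ) - γ + 2

theorem LCtx.neg {V : Type*} [Fintype V] {G : SimpleGraph V} {γ : ℕ} {lam D : ℝ} {x : V → ℝ}
    (h : LCtx G γ lam D x) : LCtx G γ lam D (fun v => - x v) := by
  classical
  refine ⟨?_, ?_, h.pos, h.dom, h.lam_eq⟩
  · intro w
    have := h.eig w
    rw [mul_neg, this, ← Finset.sum_neg_distrib]
    refine Finset.sum_congr rfl fun y _ => ?_
    split_ifs <;> ring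
  · intro y z hyz
    have := h.mx z y hyz.symm
    linarith

open Classical in
theorem LCtx.key {V : Type*} [Fintype V] {G : SimpleGraph V} {γ : ℕ} {lam D : ℝ} {x : V → ℝ}
    (h : LCtx G γ lam D x) {u v : V} (huv : G.Adj u v) (hD : x u - x v = D) :
    (Finset.univ.filter fun y => ¬ (G.Adj u y ∨ G.Adj v y)).card + 2 = γ ∧
    (∀ y, G.Adj u y → ¬ G.Adj v y → x y = x v) ∧
    (∀ y, G.Adj v y → ¬ G.Adj u y → x y = x u) := by
  set R := Finset.univ.filter fun y => ¬ (G.Adj u y ∨ G.Adj v y) with hR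
  set N := Finset.univ.filter fun y => (G.Adj u y ∨ G.Adj v y) with hN
  have hcard : N.card + R.card = Fintype.card V := by
    rw [hN, hR, Finset.card_filter_add_card_filter_not, Finset.card_univ]
  have hdom : γ ≤ R.card + 2 := by
    have h1 : IsDominatingSet G ((insert u (insert v R) : Finset V) : Set V) := by
      intro y hy
      simp only [Finset.coe_insert, Set.mem_insert_iff, Finset.mem_coe, hR, Finset.mem_filter,
        Finset.mem_univ, true_and, not_or, not_not] at hy ⊢
      have : G.Adj u y ∨ G.Adj v y := by tauto
      rcases this with h | h
      · exact ⟨u, by simp, h⟩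
      · exact ⟨v, by simp, h⟩
    have h2 := h.dom _ h1
    have h3 := Finset.card_insert_le u (insert v R)
    have h4 := Finset.card_insert_le v R
    omega
  set f : V → ℝ := fun y => (if G.Adj u y then x u - x y else 0) - (if G.Adj v y then x v - x y else 0) with hf
  set g : V → ℝ := fun y => if (G.Adj u y ∨ G.Adj v y) then D else 0 with hg
  have hfg : ∀ y ∈ Finset.univ, f y ≤ g y := by
    intro y _
    simp only [hf, hg]
    by_cases h1 : G.Adj u y <;> by_cases h2 : G.Adj v y <;> simp only [h1, h2, if_true, if_false, true_or, or_true, or_false]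
    · linarith
    · linarith [h.mx u y h1]
    · linarith [h.mx y v h2.symm]
    · linarith
  have hfs : ∑ y, f y = lam * D := by
    simp only [hf]
    rw [Finset.sum_sub_distrib, ← h.eig u, ← h.eig v, ← hD]; ring
  have hgs : ∑ y, g y = N.card * D := by
    simp only [hg]
    rw [← Finset.sum_filter, Finset.sum_const, nsmul_eq_mul]
  have hle := Finset.sum_le_sum hfg
  have hc : (N.card : ℝ) + R.card = Fintype.card V := by exact_mod_cast hcard
  have hd : (γ : ℝ) ≤ R.card + 2 := by exact_mod_cast hdom
  have hl : lam ≤ N.card := by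
    rw [hfs, hgs] at hle
    exact le_of_mul_le_mul_right hle h.pos
  have hl2 := h.lam_eq
  have hg2 : (γ : ℝ) = R.card + 2 := by linarith
  have hlN : lam = N.card := by linarith
  have heq : ∑ y, f y = ∑ y, g y := by rw [hfs, hgs, hlN]
  have hpt := (Finset.sum_eq_sum_iff_of_le hfg).1 heq
  refine ⟨by exact_mod_cast hg2.symm, ?_, ?_⟩
  · intro y h1 h2
    have := hpt y (Finset.mem_univ _)
    simp only [hf, hg, h1, h2, if_true, if_false, true_or] at this
    linarith
  · intro y h1 h2
    have := hpt y (Finset.mem_univ _)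
    simp only [hf, hg, h1, h2, if_true, if_false, or_true] at this
    linarith

theorem LCtx.indep {V : Type*} [Fintype V] {G : SimpleGraph V} {γ : ℕ} {lam D : ℝ} {x : V → ℝ}
    (h : LCtx G γ lam D x) {u v : V} (huv : G.Adj u v) (hD : x u - x v = D)
    {r s : V} (hru : ¬ G.Adj u r) (hrv : ¬ G.Adj v r) (hsu : ¬ G.Adj u s) (hsv : ¬ G.Adj v s)
    (hrs : G.Adj r s) : False := by
  classical
  obtain ⟨hc, -, -⟩ := h.key huv hD
  set R := Finset.univ.filter fun y => ¬ (G.Adj u y ∨ G.Adj v y) with hR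
  have hmem : ∀ y, y ∈ R ↔ ¬ G.Adj u y ∧ ¬ G.Adj v y := by intro y; simp [hR]
  have h1 : IsDominatingSet G ((insert u (insert v (R.erase r)) : Finset V) : Set V) := by
    intro y hy
    by_cases hyu : G.Adj u y
    · exact ⟨u, by simp, hyu⟩
    by_cases hyv : G.Adj v y
    · exact ⟨v, by simp, hyv⟩
    have hyr : y = r := by
      by_contra hne
      apply hy
      simp [hne, hmem, hyu, hyv]
    subst hyr
    exact ⟨s, by simp [hmem, hsu, hsv, hrs.ne'], hrs.symm⟩
  have h2 := h.dom _ h1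
  have h3 := Finset.card_insert_le u (insert v (R.erase r))
  have h4 := Finset.card_insert_le v (R.erase r)
  have h5 := Finset.card_erase_add_one ((hmem r).2 ⟨hru, hrv⟩)
  omega

theorem LCtx.uniq {V : Type*} [Fintype V] {G : SimpleGraph V} {γ : ℕ} {lam D : ℝ} {x : V → ℝ}
    (h : LCtx G γ lam D x) {u v : V} (huv : G.Adj u v) (hD : x u - x v = D)
    {r s w : V} (hru : ¬ G.Adj u r) (hrv : ¬ G.Adj v r) (hsu : ¬ G.Adj u s) (hsv : ¬ G.Adj v s)
    (hwr : G.Adj w r) (hws : G.Adj w s) : r = s := by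
  classical
  by_contra hne
  obtain ⟨hc, -, -⟩ := h.key huv hD
  set R := Finset.univ.filter fun y => ¬ (G.Adj u y ∨ G.Adj v y) with hR
  have hmem : ∀ y, y ∈ R ↔ ¬ G.Adj u y ∧ ¬ G.Adj v y := by intro y; simp [hR]
  have h1 : IsDominatingSet G ((insert w (insert u (insert v ((R.erase r).erase s))) : Finset V) : Set V) := by
    intro y hy
    by_cases hyu : G.Adj u y
    · exact ⟨u, by simp, hyu⟩
    by_cases hyv : G.Adj v y
    · exact ⟨v, by simp, hyv⟩
    by_cases hyw : G.Adj w y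
    · exact ⟨w, by simp, hyw⟩
    exfalso
    apply hy
    have e1 : y ≠ r := by rintro rfl; exact hyw hwr
    have e2 : y ≠ s := by rintro rfl; exact hyw hws
    simp [e1, e2, hmem, hyu, hyv]
  have h2 := h.dom _ h1
  have h3 := Finset.card_insert_le w (insert u (insert v ((R.erase r).erase s)))
  have h3 := Finset.card_insert_le u (insert v ((R.erase r).erase s))
  have h4 := Finset.card_insert_le v ((R.erase r).erase s)
  have h5 := Finset.card_erase_add_one ((hmem r).2 ⟨hru, hrv⟩)
  have h6 : s ∈ R.erase r := by simp [hmem, hsu, hsv, Ne.symm hne]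
  have h7 := Finset.card_erase_add_one h6
  omega

theorem LCtx.exb {V : Type*} [Fintype V] {G : SimpleGraph V} {γ : ℕ} {lam D : ℝ} {x : V → ℝ}
    (h : LCtx G γ lam D x) {u v : V} (huv : G.Adj u v) (hD : x u - x v = D)
    {r w : V} (hru : ¬ G.Adj u r) (hrv : ¬ G.Adj v r) (hwr : G.Adj w r) :
    ∃ b, G.Adj v b ∧ ¬ G.Adj u b ∧ ¬ G.Adj w b := by
  classical
  by_contra hno
  push Not at hno
  obtain ⟨hc, -, -⟩ := h.key huv hD
  set R := Finset.univ.filter fun y => ¬ (G.Adj u y ∨ G.Adj v y) with hR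
  have hmem : ∀ y, y ∈ R ↔ ¬ G.Adj u y ∧ ¬ G.Adj v y := by intro y; simp [hR]
  have h1 : IsDominatingSet G ((insert u (insert w (R.erase r)) : Finset V) : Set V) := by
    intro y hy
    by_cases hyu : G.Adj u y
    · exact ⟨u, by simp, hyu⟩
    by_cases hyw : G.Adj w y
    · exact ⟨w, by simp, hyw⟩
    by_cases hyv : G.Adj v y
    · exact absurd (hno y hyv hyu) hyw
    exfalso
    apply hy
    have e1 : y ≠ r := by rintro rfl; exact hyw hwr
    simp [e1, hmem, hyu, hyv]
  have h2 := h.dom _ h1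
  have h3 := Finset.card_insert_le u (insert w (R.erase r))
  have h4 := Finset.card_insert_le w (R.erase r)
  have h5 := Finset.card_erase_add_one ((hmem r).2 ⟨hru, hrv⟩)
  omega

theorem LCtx.sideA {V : Type*} [Fintype V] {G : SimpleGraph V} {γ : ℕ} {lam D : ℝ} {x : V → ℝ}
    (h : LCtx G γ lam D x) {u v : V} (huv : G.Adj u v) (hD : x u - x v = D)
    {r w : V} (hru : ¬ G.Adj u r) (hrv : ¬ G.Adj v r) (hwr : G.Adj w r)
    (hwu : G.Adj u w) (hwv : ¬ G.Adj v w) : False := by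
  classical
  obtain ⟨hc, hA, hB⟩ := h.key huv hD
  obtain ⟨b, hbv, hbu, hbw⟩ := h.exb huv hD hru hrv hwr
  have hxw := hA w hwu hwv
  have hxb := hB b hbv hbu
  have hpos := h.pos
  have hrb : r ≠ b := by rintro rfl; exact hrv hbv
  set f : V → ℝ := fun y => (if G.Adj w y then x w - x y else 0) - (if G.Adj v y then x v - x y else 0) with hf
  have hfs : ∑ y, f y = 0 := by
    simp only [hf]
    rw [Finset.sum_sub_distrib, ← h.eig w, ← h.eig v, hxw]; ring
  have hsub : ∑ y ∈ {r, b}, f y ≤ ∑ y, f y := by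
    apply Finset.sum_le_sum_of_subset_of_nonneg (Finset.subset_univ _)
    intro y _ hy
    simp only [Finset.mem_insert, Finset.mem_singleton, not_or] at hy
    simp only [hf]
    by_cases hyv : G.Adj v y
    · have hge : x v ≤ x y := by
        by_cases hyu : G.Adj u y
        · linarith [h.mx u y hyu]
        · linarith [hB y hyv hyu]
      rw [if_pos hyv]
      split_ifs <;> linarith
    · rw [if_neg hyv]
      split_ifs with hyw
      · by_cases hyu : G.Adj u y
        · linarith [hA y hyu hyv]
        · exact absurd (h.uniq huv hD hyu hyv hru hrv hyw hwr) hy.1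
      · simp
  rw [Finset.sum_pair hrb, hfs] at hsub
  simp only [hf, hwr, hrv, hbv, hbw, if_true, if_false] at hsub
  have hrw : x r - x w = D := by
    have := h.mx r w hwr.symm
    linarith
  obtain ⟨hc', hA', -⟩ := h.key hwr.symm hrw
  have hbr : G.Adj r b := by
    by_contra hbr
    set R := Finset.univ.filter fun y => ¬ (G.Adj u y ∨ G.Adj v y) with hR
    set R' := Finset.univ.filter fun y => ¬ (G.Adj r y ∨ G.Adj w y) with hR'
    have hmem : ∀ y, y ∈ R ↔ ¬ G.Adj u y ∧ ¬ G.Adj v y := by intro y; simp [hR]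
    have hmem' : ∀ y, y ∈ R' ↔ ¬ G.Adj r y ∧ ¬ G.Adj w y := by intro y; simp [hR']
    have hss : insert b (insert v (R.erase r)) ⊆ R' := by
      intro y hy
      rw [hmem']
      simp only [Finset.mem_insert, Finset.mem_erase, hmem] at hy
      rcases hy with rfl | rfl | ⟨hne, h1, h2⟩
      · exact ⟨hbr, hbw⟩
      · exact ⟨fun h => hrv h.symm, fun h => hwv h.symm⟩
      · exact ⟨fun h' => h.indep huv hD hru hrv h1 h2 h', fun h' => hne (h.uniq huv hD h1 h2 hru hrv h' hwr)⟩
    have h1 := Finset.card_le_card hss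
    have h2 : v ∉ R.erase r := by simp [hmem, huv]
    have h3 : b ∉ insert v (R.erase r) := by simp [hmem, hbv, hbv.ne']
    rw [Finset.card_insert_of_notMem h3, Finset.card_insert_of_notMem h2] at h1
    have h5 := Finset.card_erase_add_one ((hmem r).2 ⟨hru, hrv⟩)
    omega
  have := hA' b hbr hbw
  linarith

theorem LCtx.sideB {V : Type*} [Fintype V] {G : SimpleGraph V} {γ : ℕ} {lam D : ℝ} {x : V → ℝ}
    (h : LCtx G γ lam D x) {u v : V} (huv : G.Adj u v) (hD : x u - x v = D)
    {r w : V} (hru : ¬ G.Adj u r) (hrv : ¬ G.Adj v r) (hwr : G.Adj w r)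
    (hwv : G.Adj v w) (hwu : ¬ G.Adj u w) : False :=
  h.neg.sideA huv.symm (by linarith) hrv hru hwr hwv hwu

theorem LCtx.mid {V : Type*} [Fintype V] {G : SimpleGraph V} {γ : ℕ} {lam D : ℝ} {x : V → ℝ}
    (h : LCtx G γ lam D x) {u v : V} (huv : G.Adj u v) (hD : x u - x v = D)
    {r c : V} (hru : ¬ G.Adj u r) (hrv : ¬ G.Adj v r) (hcr : G.Adj c r)
    (hcu : G.Adj u c) : x c = x u := by
  classical
  obtain ⟨hc, hA, hB⟩ := h.key huv hD
  obtain ⟨b, hbv, hbu, hbc⟩ := h.exb huv hD hru hrv hcr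
  have hxb := hB b hbv hbu
  have hpos := h.pos
  set f : V → ℝ := fun y => (if G.Adj u y then x u - x y else 0) - (if G.Adj b y then x b - x y else 0) with hf
  have hfs : ∑ y, f y = 0 := by
    simp only [hf]
    rw [Finset.sum_sub_distrib, ← h.eig u, ← h.eig b, hxb]; ring
  have hnn : ∀ y ∈ Finset.univ, 0 ≤ f y := by
    intro y _
    simp only [hf]
    by_cases hyu : G.Adj u y
    · have hge : x y ≤ x u := by
        by_cases hyv : G.Adj v y
        · linarith [h.mx y v hyv.symm]
        · linarith [hA y hyu hyv]
      rw [if_pos hyu]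
      split_ifs <;> linarith
    · rw [if_neg hyu]
      split_ifs with hyb
      · by_cases hyv : G.Adj v y
        · linarith [hB y hyv hyu]
        · exact (h.sideB huv hD hyu hyv hyb hbv hbu).elim
      · simp
  have := (Finset.sum_eq_zero_iff_of_nonneg hnn).1 hfs c (Finset.mem_univ _)
  simp only [hf, hcu, if_true] at this
  rw [if_neg (fun h => hbc h.symm)] at this
  linarith

theorem LCtx.iso {V : Type*} [Fintype V] {G : SimpleGraph V} {γ : ℕ} {lam D : ℝ} {x : V → ℝ}
    (h : LCtx G γ lam D x) {u v : V} (huv : G.Adj u v) (hD : x u - x v = D)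
    {r : V} (hru : ¬ G.Adj u r) (hrv : ¬ G.Adj v r) (w : V) : ¬ G.Adj w r := by
  intro hwr
  by_cases hwu : G.Adj u w
  · by_cases hwv : G.Adj v w
    · have h1 := h.mid huv hD hru hrv hwr hwu
      have h2 := h.neg.mid huv.symm (by linarith) hrv hru hwr hwv
      have := h.pos
      linarith
    · exact h.sideA huv hD hru hrv hwr hwu hwv
  · by_cases hwv : G.Adj v w
    · exact h.sideB huv hD hru hrv hwr hwv hwu
    · exact h.indep huv hD hwu hwv hru hrv hwr

theorem isolated_vertices_of_laplacian_spectral_radius_eq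
    {V : Type*} [Fintype V] [DecidableEq V] (G : SimpleGraph V) [DecidableRel G.Adj]
    (n γ : ℕ) (hn : Fintype.card V = n) (hγ : dominationNumber G = γ)
    (hγ2 : 2 ≤ γ) (hγn : γ ≤ n - 1)
    (hrad : Module.End.HasEigenvalue (Matrix.toLin' (G.lapMatrix ℝ)) ((n : ℝ) - γ + 2)) :
    γ - 2 ≤ (Finset.univ.filter fun v : V => G.degree v = 0).card := by
  obtain ⟨x, hx⟩ := hrad.exists_hasEigenvector
  have hx0 := hx.2
  have hxe := hx.apply_eq_smul
  rw [Matrix.toLin'_apply] at hxe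
  have hle : (γ : ℝ) ≤ n := by
    have : γ ≤ n := by omega
    exact_mod_cast this
  have heig : ∀ w, ((n : ℝ) - γ + 2) * x w = ∑ y, (if G.Adj w y then x w - x y else 0) := by
    intro w
    have h1 := congrFun hxe w
    rw [lapMatrix_mulVec_apply] at h1
    simp only [Pi.smul_apply, smul_eq_mul] at h1
    rw [← h1, ← Finset.sum_filter, ← G.neighborFinset_eq_filter, Finset.sum_sub_distrib,
      Finset.sum_const, nsmul_eq_mul, G.card_neighborFinset_eq_degree]
  have hex : ∃ p : V × V, G.Adj p.1 p.2 ∧ 0 < x p.1 - x p.2 := by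
    by_contra hno
    push Not at hno
    apply hx0
    funext w
    have h0 := heig w
    have hz : ∑ y, (if G.Adj w y then x w - x y else 0) = 0 := by
      apply Finset.sum_eq_zero
      intro y _
      split_ifs with hwy
      · have h1 := hno (w, y) hwy
        have h2 := hno (y, w) hwy.symm
        simp only at h1 h2
        linarith
      · rfl
    rw [hz] at h0
    rcases mul_eq_zero.1 h0 with h | h
    · linarith
    · exact h
  obtain ⟨p0, hp0, hp0'⟩ := hex
  obtain ⟨⟨u, v⟩, hp, hmax⟩ := Finset.exists_max_image
    (Finset.univ.filter fun p : V × V => G.Adj p.1 p.2) (fun p => x p.1 - x p.2)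
    ⟨p0, by simpa using hp0⟩
  have huv : G.Adj u v := by simpa using hp
  have hctx : LCtx G γ ((n : ℝ) - γ + 2) (x u - x v) x := by
    refine ⟨?_, ?_, ?_, ?_, by rw [hn]⟩
    · intro w
      rw [heig w]
      refine Finset.sum_congr rfl fun y _ => ?_
      congr
    · intro y z hyz
      exact hmax (y, z) (by simpa using hyz)
    · exact lt_of_lt_of_le hp0' (hmax p0 (by simpa using hp0))
    · intro S hS
      rw [← hγ]
      exact Nat.sInf_le ⟨S, rfl, hS⟩
  obtain ⟨hc, -, -⟩ := hctx.key huv rfl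
  have hcc : γ - 2 = _ := (Nat.eq_sub_of_add_eq hc).symm
  rw [hcc]
  apply Finset.card_le_card
  intro r hr
  simp only [Finset.mem_filter, Finset.mem_univ, true_and, not_or] at hr ⊢
  rw [← G.card_neighborFinset_eq_degree, Finset.card_eq_zero, Finset.eq_empty_iff_forall_notMem]
  intro w hw
  rw [mem_neighborFinset] at hw
  exact hctx.iso huv rfl hr.1 hr.2 w hw.symm
end

section
/- Let G be a simple graph on n vertices with domination number γ, where 1 ≤ γ ≤ n−1. Then the signless Laplacian spectral radius of G satisfies q(G) ≤ 2(n − γ); equivalently, every eigenvalue of the signless Laplacian matrix Q(G) is at most 2(n − γ). -/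
open SimpleGraph Matrix

/-- The signless Laplacian matrix `D(G) + A(G)` of a simple graph. -/
def signlessLapMatrix {V : Type*} [Fintype V] [DecidableEq V]
    (G : SimpleGraph V) [DecidableRel G.Adj] : Matrix V V ℝ :=
  G.degMatrix ℝ + G.adjMatrix ℝ

theorem signless_laplacian_eigenvalue_le_of_dominationNumber
    {V : Type*} [Fintype V] [DecidableEq V] (G : SimpleGraph V) [DecidableRel G.Adj]
    (n γ : ℕ) (hn : Fintype.card V = n) (hγ : dominationNumber G = γ)
    (hγ1 : 1 ≤ γ) (hγn : γ ≤ n - 1)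
    (q : ℝ) (hq : Module.End.HasEigenvalue (Matrix.toLin' (signlessLapMatrix G)) q) :
    q ≤ 2 * ((n : ℝ) - γ) := by
  classical
  obtain ⟨x, hx⟩ := hq.exists_hasEigenvector
  have hx0 : x ≠ 0 := hx.2
  have hEq : (signlessLapMatrix G) *ᵥ x = q • x := by
    have := hx.apply_eq_smul
    rwa [Matrix.toLin'_apply] at this
  obtain ⟨w, hw⟩ := Function.ne_iff.mp hx0
  obtain ⟨i, -, hi⟩ := Finset.exists_max_image Finset.univ (fun v => |x v|) ⟨w, Finset.mem_univ w⟩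
  have hpos : 0 < |x i| := lt_of_lt_of_le (abs_pos.mpr hw) (hi w (Finset.mem_univ w))
  have hrow : (G.degree i : ℝ) * x i + ∑ j ∈ G.neighborFinset i, x j = q * x i := by
    have := congrFun hEq i
    simpa [signlessLapMatrix, Matrix.add_mulVec, SimpleGraph.degMatrix,
      Matrix.mulVec_diagonal, SimpleGraph.adjMatrix_mulVec_apply] using this
  have hsum : |∑ j ∈ G.neighborFinset i, x j| ≤ G.degree i * |x i| := by
    refine (Finset.abs_sum_le_sum_abs _ _).trans ?_
    refine (Finset.sum_le_card_nsmul _ _ |x i| (fun j _ => hi j (Finset.mem_univ j))).trans ?_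
    simp
  have hq2 : q ≤ 2 * G.degree i := by
    have h1 : |q * x i| ≤ 2 * G.degree i * |x i| := by
      rw [← hrow]
      refine (abs_add_le _ _).trans ?_
      rw [abs_mul, Nat.abs_cast]
      linarith
    rw [abs_mul] at h1
    exact (le_abs_self q).trans (le_of_mul_le_mul_right h1 hpos)
  have hdom : γ ≤ (G.neighborFinset i)ᶜ.card := by
    rw [← hγ]
    refine Nat.sInf_le ⟨_, rfl, ?_⟩
    intro v hv
    refine ⟨i, by simp, ?_⟩
    simpa using hv
  have hcard : γ + G.degree i ≤ n := by
    rw [Finset.card_compl, hn, SimpleGraph.card_neighborFinset_eq_degree] at hdom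
    omega
  have : (γ : ℝ) + G.degree i ≤ n := by exact_mod_cast hcard
  linarith
end

section
/- Let G be a simple graph with domination number γ(G), let uv be an edge of G, and set D_{uv} = (V(G) \ (N(u) ∪ N(v))) ∪ {u, v}. If |D_{uv}| = γ(G) (so D_{uv} is a minimum dominating set), then D_{uv} \ {u, v} is an independent set of G, i.e., no two vertices of D_{uv} \ {u, v} are adjacent in G. -/
open SimpleGraph Matrix

theorem independent_of_minimum_dominating_Duv
    {V : Type*} [Fintype V] [DecidableEq V] (G : SimpleGraph V) [DecidableRel G.Adj]
    (u v : V) (huv : G.Adj u v)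
    (D : Finset V)
    (hD : D = (Finset.univ \ (G.neighborFinset u ∪ G.neighborFinset v)) ∪ {u, v})
    (hcard : D.card = dominationNumber G) :
    ∀ x ∈ D, ∀ y ∈ D, x ≠ u → x ≠ v → y ≠ u → y ≠ v → ¬ G.Adj x y := by
  intro x hx y hy hxu hxv hyu hyv hxy
  have hdom : IsDominatingSet G ((D.erase x : Finset V) : Set V) := by
    intro w hw
    have huD : u ∈ D := by rw [hD]; simp
    have hvD : v ∈ D := by rw [hD]; simp
    by_cases hwx : w = x
    · subst hwx
      exact ⟨y, by simp [hy, hxy.ne'], hxy.symm⟩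
    · have hwD : w ∉ D := fun h => hw (by simp [h, hwx])
      have h : G.Adj u w ∨ G.Adj v w := by
        by_contra hc
        apply hwD
        rw [hD]
        simp only [Finset.mem_union, Finset.mem_sdiff, Finset.mem_univ, true_and,
          SimpleGraph.mem_neighborFinset]
        exact Or.inl hc
      rcases h with h | h
      · exact ⟨u, by simp [huD, hxu.symm], h⟩
      · exact ⟨v, by simp [hvD, hxv.symm], h⟩
  have hle : dominationNumber G ≤ (D.erase x).card := Nat.sInf_le ⟨_, rfl, hdom⟩
  have hlt := Finset.card_erase_lt_of_mem hx
  omega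
end

section
/- Let G be a simple graph with domination number γ(G), let u be a vertex of G, and set D_u = V(G) \ N(u). If |D_u| = γ(G) (so D_u is a minimum dominating set), then D_u \ {u} is an independent set of G, i.e., no two vertices of D_u \ {u} are adjacent in G. -/
open SimpleGraph Matrix

theorem independent_of_minimum_dominating_Du
    {V : Type*} [Fintype V] [DecidableEq V] (G : SimpleGraph V) [DecidableRel G.Adj]
    (u : V) (D : Finset V)
    (hD : D = Finset.univ \ G.neighborFinset u)
    (hcard : D.card = dominationNumber G) :
    ∀ x ∈ D, ∀ y ∈ D, x ≠ u → y ≠ u → ¬ G.Adj x y := by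
  intro x hx y hy hxu hyu hxy
  have hdom : IsDominatingSet G ((D.erase x : Finset V) : Set V) := by
    intro v hv
    by_cases hvx : v = x
    · subst hvx
      refine ⟨y, ?_, hxy.symm⟩
      rw [Finset.mem_coe, Finset.mem_erase]
      exact ⟨hxy.ne', hy⟩
    · have hvD : v ∉ D := fun h => hv (by
        rw [Finset.mem_coe, Finset.mem_erase]
        exact ⟨hvx, h⟩)
      refine ⟨u, ?_, ?_⟩
      · rw [Finset.mem_coe, Finset.mem_erase]
        refine ⟨hxu.symm, ?_⟩
        simp [hD]
      · simpa [hD] using hvD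
  have h1 : dominationNumber G ≤ (D.erase x).card := Nat.sInf_le ⟨D.erase x, rfl, hdom⟩
  have h2 := Finset.card_erase_lt_of_mem hx
  omega
end

section
/- Let G be a bipartite simple graph on n vertices with domination number γ, where 2 ≤ γ ≤ n−1. Then the signless Laplacian spectral radius of G satisfies q(G) ≤ n − γ + 2; equivalently, every eigenvalue of the signless Laplacian matrix Q(G) is at most n − γ + 2. -/
open SimpleGraph Matrix

theorem aux_degree_sum {V : Type*} [Fintype V] [DecidableEq V] (G : SimpleGraph V)
    [DecidableRel G.Adj] (hbip : G.Colorable 2) (u v : V) (huv : G.Adj u v) :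
    dominationNumber G + (G.degree u + G.degree v) ≤ Fintype.card V + 2 := by
  obtain ⟨c⟩ := hbip
  have hd : Disjoint (G.neighborFinset u) (G.neighborFinset v) := by
    rw [Finset.disjoint_left]
    intro w hu hv
    rw [mem_neighborFinset] at hu hv
    have h1 := c.valid huv
    have h2 := c.valid hu
    have h3 := c.valid hv
    generalize c u = a at *
    generalize c v = b at *
    generalize c w = d at *
    fin_cases a <;> fin_cases b <;> fin_cases d <;> simp_all
  have hc := Finset.card_union_of_disjoint hd
  rw [card_neighborFinset_eq_degree, card_neighborFinset_eq_degree] at hc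
  have hcc := Finset.card_add_card_compl (G.neighborFinset u ∪ G.neighborFinset v)
  have hS := Finset.card_union_le (G.neighborFinset u ∪ G.neighborFinset v)ᶜ {u, v}
  have h2 := Finset.card_le_two (a := u) (b := v)
  have hle : dominationNumber G ≤
      ((G.neighborFinset u ∪ G.neighborFinset v)ᶜ ∪ {u, v}).card := by
    apply Nat.sInf_le
    refine ⟨_, rfl, ?_⟩
    intro w hw
    simp only [Finset.coe_union, Set.mem_union, Finset.mem_coe, Finset.mem_compl,
      Finset.mem_union, mem_neighborFinset, not_or, not_not, Finset.mem_insert,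
      Finset.mem_singleton] at hw
    by_cases h : G.Adj u w
    · exact ⟨u, by simp, h⟩
    · exact ⟨v, by simp, by tauto⟩
  omega

theorem bipartite_signless_laplacian_eigenvalue_le
    {V : Type*} [Fintype V] [DecidableEq V] (G : SimpleGraph V) [DecidableRel G.Adj]
    (n γ : ℕ) (hn : Fintype.card V = n) (hγ : dominationNumber G = γ)
    (hγ2 : 2 ≤ γ) (hγn : γ ≤ n - 1) (hbip : G.Colorable 2)
    (q : ℝ) (hq : Module.End.HasEigenvalue (Matrix.toLin' (signlessLapMatrix G)) q) :
    q ≤ (n : ℝ) - γ + 2 := by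
  obtain ⟨x, hx⟩ := hq.exists_hasEigenvector
  have hx0 := hx.2
  have hxe := hx.apply_eq_smul
  have key : ∀ u, q * x u = ∑ w ∈ G.neighborFinset u, (x u + x w) := by
    intro u
    have := congrFun hxe u
    rw [Matrix.toLin'_apply, signlessLapMatrix, Matrix.add_mulVec, Pi.add_apply,
      SimpleGraph.adjMatrix_mulVec_apply, SimpleGraph.degMatrix, Matrix.mulVec_diagonal] at this
    rw [Finset.sum_add_distrib, Finset.sum_const, card_neighborFinset_eq_degree, nsmul_eq_mul]
    simpa using this.symm
  have hγn' : (γ : ℝ) ≤ n := by exact_mod_cast (by omega : γ ≤ n)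
  by_cases hy : ∀ u v, G.Adj u v → x u + x v = 0
  · obtain ⟨u, hu⟩ := Function.ne_iff.mp hx0
    have h0 := key u
    rw [Finset.sum_eq_zero (fun w hw => hy u w ((mem_neighborFinset ..).mp hw))] at h0
    have : q = 0 := (mul_eq_zero.mp h0).resolve_right hu
    linarith
  · push Not at hy
    obtain ⟨a, b, hab, hne⟩ := hy
    obtain ⟨⟨u, v⟩, hm, hmax⟩ := Finset.exists_max_image
      (Finset.univ.filter (fun p : V × V => G.Adj p.1 p.2)) (fun p => |x p.1 + x p.2|)
      ⟨(a, b), by simpa using hab⟩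
    have huv : G.Adj u v := by simpa using hm
    have hM : ∀ s t, G.Adj s t → |x s + x t| ≤ |x u + x v| :=
      fun s t h => hmax (s, t) (by simpa using h)
    have hpos : 0 < |x u + x v| := lt_of_lt_of_le (abs_pos.mpr hne) (hM a b hab)
    have hb : ∀ s, |q * x s| ≤ G.degree s * |x u + x v| := by
      intro s
      rw [key s]
      refine (Finset.abs_sum_le_sum_abs _ _).trans ?_
      refine (Finset.sum_le_card_nsmul _ _ _
        (fun w hw => hM s w ((mem_neighborFinset ..).mp hw))).trans ?_
      rw [card_neighborFinset_eq_degree, nsmul_eq_mul]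
    have h1 : |q| * |x u + x v| ≤ (G.degree u + G.degree v) * |x u + x v| := by
      rw [← abs_mul, mul_add, add_mul]
      exact (abs_add_le _ _).trans (add_le_add (hb u) (hb v))
    have h2 := le_of_mul_le_mul_right h1 hpos
    have h3 := aux_degree_sum G hbip u v huv
    rw [hγ, hn] at h3
    have h4 : (γ : ℝ) + (G.degree u + G.degree v) ≤ n + 2 := by exact_mod_cast h3
    linarith [le_abs_self q]
end
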